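/- Let k be a field of characteristic p > 0 and let A be a finite dimensional, local, commutative k-algebra with maximal ideal m satisfying a^p = 0 for all a ∈ m. Let Δ, Δ' : A → A ⊗_k A be two k-algebra homomorphisms with the property that, for every a ∈ m, both Δ(a) − a⊗1 − 1⊗a and Δ'(a) − a⊗1 − 1⊗a lie in the image of m ⊗_k m in A ⊗_k A. Let M, M' be A-modules and let M ⊠ M' denote the k-vector space M ⊗_k M' with its natural (A ⊗_k A)-module structure. Then for any k-algebra homomorphism α : k[t]/(t^p) → A making A a free k[t]/(t^p)-module, the k[t]/(t^p)-module obtained by restricting M ⊠ M' along Δ∘α is projective if and only if the k[t]/(t^p)-module obtained by restricting M ⊠ M' along Δ'∘α is projective. -/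

import Mathlib

open Polynomial TensorProduct

/-- The truncated polynomial algebra `k[t]/(t^p)`. -/
abbrev TruncPoly (k : Type*) [Field k] (p : ℕ) :=
  Polynomial k ⧸ Ideal.span {(Polynomial.X : Polynomial k) ^ p}

/-- The external tensor product module structure: if `M` is an `A`-module and `N` is a
`B`-module (compatibly with the `k`-structures), then `M ⊗ₖ N` is an `(A ⊗ₖ B)`-module with
`(a ⊗ b) • (m ⊗ n) = (a • m) ⊗ (b • n)`. -/
noncomputable def extTensorModule (k : Type*) [Field k] {A B : Type*} [Ring A] [Ring B]
    [Algebra k A] [Algebra k B] (M N : Type*)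
    [AddCommGroup M] [Module k M] [Module A M] [IsScalarTower k A M]
    [AddCommGroup N] [Module k N] [Module B N] [IsScalarTower k B N] :
    Module (A ⊗[k] B) (M ⊗[k] N) :=
  Module.compHom (M ⊗[k] N)
    ((Module.endTensorEndAlgHom (R := k) (S := k) (A := k) (M := M) (N := N)).comp
      (Algebra.TensorProduct.map (Algebra.lsmul k k M) (Algebra.lsmul k k N))).toRingHom

/-!
Let `x` act on `M` with `x ^ p = 0`, and let `D = x + z X` act on `M[X]`, where `y ^ p = z ^ p = 0`.
Evaluation at `0` and at `y` presents `M`, with `D` acting as `x` and as `x + y z`, as the cokernel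
of the injective multiplications by `X` and by `X - y` on `M[X]`. By the long exact sequence,
`M` is exact at such an operator (`ker D = im D ^ (p - 1)`) if and only if the multiplication is
onto on `ker D / im D ^ (p - 1)` and injective on `ker D ^ (p - 1) / im D`. Since
`X ^ p = (X - y) ^ p`, these conditions agree for `X` and `X - y`. Hence exactness at `x` depends
only on `x` modulo the square of the kernel of Frobenius, which contains `Δ a - Δ' a` when
`a ^ p = 0`. Over `k[t]/(t^p)`, exactness at `t` is projectivity.
-/

theorem surjective_smul_pow_iff {G α : Type*} [Monoid G] [MulAction G α] {g : G} {n : ℕ}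
    (hn : n ≠ 0) :
    Function.Surjective (g ^ n • · : α → α) ↔ Function.Surjective (g • · : α → α) := by
  rw [← smul_iterate]
  refine ⟨fun h ↦ ?_, fun h ↦ h.iterate n⟩
  rw [← Nat.succ_pred hn, Function.iterate_succ'] at h
  exact h.of_comp

section Homology

open scoped Pointwise

variable {R : Type*} [CommRing R] (d d' e : R) (N : Type*) [AddCommGroup N] [Module R N]

/-- The homology `ker d / im d'` of a pair of ring elements acting on the module `N`. Since
`d * d' = 0` is not built in, the image is intersected with the kernel. -/
abbrev SMulHomology :=
  Submodule.torsionBy R N d ⧸ (d' • (⊤ : Submodule R N)).submoduleOf (Submodule.torsionBy R N d)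

variable {d d' e N}

theorem surjective_smul_sMulHomology_iff :
    Function.Surjective (e • · : SMulHomology d d' N → SMulHomology d d' N) ↔
      ∀ n : N, d • n = 0 → ∃ n' a : N, d • n' = 0 ∧ n = e • n' + d' • a := by
  simp only [Function.Surjective, (Submodule.Quotient.mk_surjective _).forall,
    (Submodule.Quotient.mk_surjective _).exists]
  have mk_eq (x y : Submodule.torsionBy R N d) :
      e • (Submodule.Quotient.mk y : SMulHomology d d' N) = Submodule.Quotient.mk x ↔
        ∃ a : N, (x : N) = e • (y : N) + d' • a := by
    rw [← Submodule.Quotient.mk_smul, eq_comm, Submodule.Quotient.eq]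
    simp [Submodule.submoduleOf, Submodule.mem_smul_pointwise_iff_exists, eq_sub_iff_add_eq',
      eq_comm]
  simp only [mk_eq, Subtype.forall, Subtype.exists, Submodule.mem_torsionBy_iff, exists_prop,
    exists_and_left]

theorem isSMulRegular_sMulHomology_iff :
    IsSMulRegular (SMulHomology d d' N) e ↔
      ∀ n a : N, d • n = 0 → e • n = d' • a → ∃ b, n = d' • b := by
  simp only [isSMulRegular_quotient_iff_mem_of_smul_mem, Submodule.submoduleOf,
    Submodule.mem_comap, Submodule.subtype_apply, Submodule.mem_smul_pointwise_iff_exists,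
    Submodule.mem_top, true_and, Subtype.forall, Submodule.mem_torsionBy_iff, SetLike.mk_smul_mk,
    forall_exists_index, eq_comm]
  exact forall_congr' fun n ↦ forall_comm

variable {S : Type*} [CommRing S] {σ : R →+* S} {M : Type*} [AddCommGroup M] [Module S M]

theorem exact_smul_iff_of_shortExact (hdd' : d * d' = 0) {π : N →ₛₗ[σ] M}
    (he : IsSMulRegular N e) (hexact : Function.Exact (e • · : N → N) π)
    (hπ : Function.Surjective π) :
    Function.Exact (σ d' • · : M → M) (σ d • ·) ↔
      Function.Surjective (e • · : SMulHomology d d' N → SMulHomology d d' N) ∧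
        IsSMulRegular (SMulHomology d' d N) e := by
  have mem_range (n : N) : π n = 0 ↔ ∃ b, e • b = n := hexact n
  have hdd'N (n : N) : d • d' • n = 0 := by rw [smul_smul, hdd', zero_smul]
  rw [surjective_smul_sMulHomology_iff, isSMulRegular_sMulHomology_iff]
  constructor
  · intro h
    have lift (n b : N) (hn : d • n = e • b) : ∃ a c, n = d' • a + e • c ∧ d • c = b := by
      obtain ⟨m, hm⟩ := (h (π n)).1 <|
        (map_smulₛₗ π d n).symm.trans ((mem_range _).2 ⟨b, hn.symm⟩)
      obtain ⟨a, rfl⟩ := hπ m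
      obtain ⟨c, hc⟩ := (mem_range (n - d' • a)).1 (by simp [← hm])
      have hn' : n = d' • a + e • c := by rw [hc]; abel
      refine ⟨a, c, hn', he ?_⟩
      simp only [← hn, hn', smul_add, hdd'N, zero_add, smul_comm d e]
    refine ⟨fun n hn ↦ ?_, fun n a _ hna ↦ ?_⟩
    · obtain ⟨a, c, rfl, hc⟩ := lift n 0 (by rw [hn, smul_zero])
      exact ⟨c, a, hc, add_comm _ _⟩
    · obtain ⟨_, c, -, hc⟩ := lift a n hna.symm
      exact ⟨c, hc.symm⟩
  · rintro ⟨hsurj, hinj⟩ m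
    obtain ⟨n, rfl⟩ := hπ m
    constructor
    · intro (hn : σ d • π n = 0)
      obtain ⟨b, hb⟩ := (mem_range (d • n)).1 (by rw [map_smulₛₗ, hn])
      have hd'b : d' • b = 0 := he.right_eq_zero_of_smul <| by
        rw [smul_comm, hb, smul_comm, hdd'N]
      obtain ⟨c, rfl⟩ := hinj b n hd'b hb
      obtain ⟨n', a, -, hn'⟩ := hsurj (n - e • c) (by rw [smul_sub, smul_comm, hb, sub_self])
      refine ⟨π a, ?_⟩
      have hker (b : N) : π (e • b) = 0 := (mem_range _).2 ⟨b, rfl⟩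
      simpa [hker] using (congrArg π hn').symm
    · rintro ⟨a, ha⟩
      simp only [← ha, smul_smul, ← map_mul, hdd', map_zero, zero_smul]

theorem exact_smul_iff_of_pow_eq_pow (hdd' : d * d' = 0)
    {S' : Type*} [CommRing S'] {σ' : R →+* S'} {M' : Type*} [AddCommGroup M'] [Module S' M']
    {e' : R} {n : ℕ} (hn : n ≠ 0) (hee' : e ^ n = e' ^ n)
    {π : N →ₛₗ[σ] M} (he : IsSMulRegular N e) (hexact : Function.Exact (e • · : N → N) π)
    (hπ : Function.Surjective π)
    {π' : N →ₛₗ[σ'] M'} (hexact' : Function.Exact (e' • · : N → N) π')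
    (hπ' : Function.Surjective π') :
    Function.Exact (σ d' • · : M → M) (σ d • ·) ↔
      Function.Exact (σ' d' • · : M' → M') (σ' d • ·) := by
  have he' : IsSMulRegular N e' := by
    rw [← IsSMulRegular.pow_iff hn.pos, ← hee']; exact he.pow n
  rw [exact_smul_iff_of_shortExact hdd' he hexact hπ,
    exact_smul_iff_of_shortExact hdd' he' hexact' hπ',
    ← surjective_smul_pow_iff hn, ← surjective_smul_pow_iff (g := e') hn,
    ← IsSMulRegular.pow_iff hn.pos, ← IsSMulRegular.pow_iff (a := e') hn.pos, hee']

end Homology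

section Evaluation

variable {S M : Type*} [CommRing S] [AddCommGroup M] [Module S M]

variable (M) in
/-- Evaluation `M[X] → M` at `y`, as a map semilinear along evaluation `S[X] → S` at `y`. -/
noncomputable def evalSemilinear (y : S) : PolynomialModule S M →ₛₗ[evalRingHom y] M where
  __ := PolynomialModule.eval y
  map_smul' q f := PolynomialModule.eval_smul q f y

theorem evalSemilinear_surjective (y : S) : Function.Surjective (evalSemilinear M y) :=
  fun m ↦ ⟨PolynomialModule.single S 0 m,
    (PolynomialModule.eval_single y 0 m).trans (by simp)⟩

theorem exact_X_sub_C_smul_evalSemilinear (y : S) :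
    Function.Exact ((X - C y) • · : PolynomialModule S M → PolynomialModule S M)
      (evalSemilinear M y) := by
  have sub_const (f : PolynomialModule S M) :
      ∃ g, (X - C y) • g = f - PolynomialModule.single S 0 (evalSemilinear M y f) := by
    induction f using PolynomialModule.induction_linear with
    | zero => exact ⟨0, by simp⟩
    | add f₁ f₂ h₁ h₂ =>
      obtain ⟨g₁, h₁⟩ := h₁
      obtain ⟨g₂, h₂⟩ := h₂
      exact ⟨g₁ + g₂, by rw [smul_add, h₁, h₂, map_add, PolynomialModule.single_add]; abel⟩
    | single n m =>
      obtain ⟨q, hq⟩ := sub_dvd_pow_sub_pow X (C y) n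
      have eval_single : evalSemilinear M y (PolynomialModule.single S n m) = y ^ n • m :=
        PolynomialModule.eval_single y n m
      refine ⟨q • PolynomialModule.single S 0 m, ?_⟩
      rw [smul_smul, ← hq, sub_smul, ← C_pow, ← monomial_zero_left, X_pow_eq_monomial,
        PolynomialModule.monomial_smul_single, PolynomialModule.monomial_smul_single,
        eval_single, one_smul, add_zero]
  intro f
  constructor
  · intro hf
    obtain ⟨g, hg⟩ := sub_const f
    exact ⟨g, by simpa [hf] using hg⟩
  · rintro ⟨g, rfl⟩
    simp

theorem isSMulRegular_X : IsSMulRegular (PolynomialModule S M) (X : S[X]) := by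
  rw [isSMulRegular_iff_right_eq_zero_of_smul]
  intro f hf
  ext n
  simpa [X, PolynomialModule.monomial_smul_apply] using
    congrArg (PolynomialModule.coeff · (n + 1)) hf

end Evaluation

section Perturbation

variable {S M : Type*} [CommRing S] [AddCommGroup M] [Module S M] {p : ℕ} [Fact p.Prime]
  [CharP S p]

theorem exact_smul_add_mul_iff {x y z : S} (hx : x ^ p = 0) (hy : y ^ p = 0)
    (hz : z ^ p = 0) :
    Function.Exact (x ^ (p - 1) • · : M → M) (x • ·) ↔
      Function.Exact ((x + y * z) ^ (p - 1) • · : M → M) ((x + y * z) • ·) := by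
  have hp : p ≠ 0 := (Fact.out : p.Prime).ne_zero
  let D : S[X] := C x + X * C z
  have hD : D * D ^ (p - 1) = 0 := by
    rw [mul_pow_sub_one hp, add_pow_char, mul_pow, ← C_pow, ← C_pow, hx, hz]
    simp
  have hXy : (X - C 0 : S[X]) ^ p = (X - C y) ^ p := by
    rw [sub_pow_char, sub_pow_char, ← C_pow, ← C_pow, hy, zero_pow hp]
  simpa [D, mul_comm z y] using exact_smul_iff_of_pow_eq_pow hD hp hXy
    (by simpa using isSMulRegular_X)
    (exact_X_sub_C_smul_evalSemilinear (M := M) 0) (evalSemilinear_surjective 0)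
    (exact_X_sub_C_smul_evalSemilinear (M := M) y) (evalSemilinear_surjective y)

theorem exact_smul_iff_of_sub_mem_ker_frobenius_sq {x x' : S} (hx : x ^ p = 0)
    (hxx' : x' - x ∈ RingHom.ker (frobenius S p) ^ 2) :
    Function.Exact (x ^ (p - 1) • · : M → M) (x • ·) ↔
      Function.Exact (x' ^ (p - 1) • · : M → M) (x' • ·) := by
  obtain ⟨s, rfl⟩ : ∃ s, x' = x + s := ⟨x' - x, by ring⟩
  rw [add_sub_cancel_left, sq] at hxx'
  induction hxx' using Submodule.mul_induction_on' generalizing x with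
  | mem_mul_mem y hy z hz => exact exact_smul_add_mul_iff hx hy hz
  | add s hs s' _ ih ih' =>
    have hxs : (x + s) ^ p = 0 := by
      rw [add_pow_char, hx, zero_add]
      exact Ideal.mul_le_right hs
    rw [ih hx, ih' hxs, add_assoc]

end Perturbation

section Freeness

variable {R : Type*} [CommRing R] {t : R} {n : ℕ}

theorem exists_eq_smul_of_pow_smul_eq_zero {P : Type*} [AddCommGroup P] [Module R P]
    (hP : Function.Exact (t ^ (n - 1) • · : P → P) (t • ·)) {j : ℕ} (hj : j < n) {m : P}
    (hm : t ^ j • m = 0) : ∃ m', m = t • m' := by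
  induction j generalizing m with
  | zero => exact ⟨0, by simpa using hm⟩
  | succ j ih =>
    obtain ⟨a, ha : t ^ (n - 1) • a = t ^ j • m⟩ :=
      (hP (t ^ j • m)).1 <| by simpa only [smul_smul, ← pow_succ'] using hm
    obtain ⟨i, hi⟩ : ∃ i, n - 1 = j + (i + 1) := ⟨n - 1 - j - 1, by omega⟩
    obtain ⟨m', hm'⟩ := ih (m := m - t ^ (i + 1) • a) (by omega) <| by
      rw [smul_sub, smul_smul, ← pow_add, ← hi, ha, sub_self]
    exact ⟨m' + t ^ i • a, by rw [smul_add, ← hm', smul_smul, ← pow_succ', sub_add_cancel]⟩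

variable {F P : Type*} [AddCommGroup F] [Module R F] [AddCommGroup P] [Module R P] {f : F →ₗ[R] P}

theorem surjective_of_surjective_mod_smul (ht : t ^ n = 0)
    (hf : ∀ m, ∃ x m', m = f x + t • m') : Function.Surjective f := by
  have approx (j : ℕ) (m : P) : ∃ x m', m = f x + t ^ j • m' := by
    induction j with
    | zero => exact ⟨0, m, by simp⟩
    | succ j ih =>
      obtain ⟨x, m₁, h₁⟩ := ih
      obtain ⟨x', m₂, h₂⟩ := hf m₁
      refine ⟨x + t ^ j • x', m₂, ?_⟩
      rw [h₁, h₂, smul_add, smul_smul, ← pow_succ, map_add, map_smul, add_assoc]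
  intro m
  obtain ⟨x, m', h⟩ := approx n m
  exact ⟨x, by rw [h, ht, zero_smul, add_zero]⟩

theorem injective_of_injective_mod_smul (ht : t ^ n = 0)
    (hP : Function.Exact (t ^ (n - 1) • · : P → P) (t • ·))
    (hf : ∀ x m, f x = t • m → ∃ x', x = t • x') : Function.Injective f := by
  rw [injective_iff_map_eq_zero]
  intro x hx
  have divisible (j : ℕ) (hj : j ≤ n) : ∃ x', x = t ^ j • x' := by
    induction j with
    | zero => exact ⟨x, by simp⟩
    | succ j ih =>
      obtain ⟨x', rfl⟩ := ih (by omega)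
      obtain ⟨m, hm⟩ := exists_eq_smul_of_pow_smul_eq_zero hP hj (m := f x') <| by
        rw [← map_smul, hx]
      obtain ⟨x'', rfl⟩ := hf x' m hm
      exact ⟨x'', by rw [smul_smul, pow_succ]⟩
  obtain ⟨x', rfl⟩ := divisible n le_rfl
  rw [ht, zero_smul]

theorem repr_mk_linearCombination {I : Ideal R} {ι : Type*}
    (b : Module.Basis ι (R ⧸ I) (P ⧸ (I • ⊤ : Submodule R P))) {v : ι → P}
    (hv : ∀ i, Submodule.Quotient.mk (v i) = b i) (x : ι →₀ R) :
    b.repr (Submodule.Quotient.mk (Finsupp.linearCombination R v x)) =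
      Finsupp.mapRange (Ideal.Quotient.mk I) (map_zero _) x := by
  induction x using Finsupp.induction_linear with
  | zero => simp
  | add x y hx hy =>
    rw [map_add, Submodule.Quotient.mk_add, map_add, hx, hy, Finsupp.mapRange_add (map_add _)]
  | single i r =>
    have mk_smul : (Submodule.Quotient.mk (r • v i) : P ⧸ (I • ⊤ : Submodule R P)) =
        Ideal.Quotient.mk I r • b i := by
      rw [← hv]; rfl
    rw [Finsupp.linearCombination_single, mk_smul, map_smul, b.repr_self,
      Finsupp.smul_single_one, Finsupp.mapRange_single]

theorem free_of_exact_smul (hmax : (Ideal.span {t}).IsMaximal) (ht : t ^ n = 0)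
    (hP : Function.Exact (t ^ (n - 1) • · : P → P) (t • ·)) : Module.Free R P := by
  let I := Ideal.span {t}
  let _ : Field (R ⧸ I) := Ideal.Quotient.field I
  let Q := P ⧸ (I • ⊤ : Submodule R P)
  have mk_eq_zero (m : P) : (Submodule.Quotient.mk m : Q) = 0 ↔ ∃ m', t • m' = m := by
    simp [I, Submodule.Quotient.mk_eq_zero, Submodule.ideal_span_singleton_smul,
      Submodule.mem_smul_pointwise_iff_exists]
  let b := Module.Basis.ofVectorSpace (R ⧸ I) Q
  choose v hv using fun i ↦ Submodule.Quotient.mk_surjective _ (b i)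
  let f := Finsupp.linearCombination R v
  have hsurj : Function.Surjective f := surjective_of_surjective_mod_smul ht fun m ↦ by
    obtain ⟨x, hx⟩ := Finsupp.mapRange_surjective _ (map_zero _) Ideal.Quotient.mk_surjective
      (b.repr (Submodule.Quotient.mk m))
    obtain ⟨m', hm'⟩ := (mk_eq_zero (m - f x)).1 <| by
      rw [Submodule.Quotient.mk_sub, sub_eq_zero, ← b.repr.injective.eq_iff, ← hx,
        repr_mk_linearCombination b hv]
    exact ⟨x, m', by rw [hm', add_sub_cancel]⟩
  have hinj : Function.Injective f := injective_of_injective_mod_smul ht hP fun x m hxm ↦ by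
    have hx := repr_mk_linearCombination b hv x
    rw [(mk_eq_zero _).2 ⟨m, hxm.symm⟩, map_zero] at hx
    have ht_dvd (i) : t ∣ x i := by
      rw [← Ideal.mem_span_singleton, ← Ideal.Quotient.eq_zero_iff_mem]
      exact (DFunLike.congr_fun hx i).symm
    choose q hq using ht_dvd
    refine ⟨∑ i ∈ x.support, Finsupp.single i (q i), ?_⟩
    simp only [Finset.smul_sum, Finsupp.smul_single, smul_eq_mul, ← hq]
    exact x.sum_single.symm
  exact Module.Free.of_equiv (LinearEquiv.ofBijective f ⟨hinj, hsurj⟩)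

theorem exact_smul_of_flat [Module.Flat R P] {c d : R} (hcd : c * d = 0)
    (h : ∀ r, c * r = 0 → d ∣ r) : Function.Exact (d • · : P → P) (c • ·) := by
  intro m
  constructor
  · intro hm
    obtain ⟨k, a, y, hmy, ha⟩ := Module.Flat.isTrivialRelation_of_sum_smul_eq_zero
      (f := fun _ : Unit ↦ c) (x := fun _ ↦ m) (by simpa using hm)
    choose q hq using fun j ↦ h (a () j) (by simpa using ha j)
    exact ⟨∑ j, q j • y j, by simp [hmy (), hq, Finset.smul_sum, mul_smul]⟩
  · rintro ⟨m, rfl⟩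
    simp [smul_smul, hcd]

end Freeness

namespace TruncPoly

variable (k : Type*) [Field k] (p : ℕ)

/-- The class of `t` in `k[t]/(t^p)`. -/
noncomputable def gen : TruncPoly k p := Ideal.Quotient.mk _ X

theorem gen_pow : gen k p ^ p = 0 :=
  Ideal.Quotient.eq_zero_iff_mem.2 (Ideal.mem_span_singleton_self (X ^ p))

variable {k p}

theorem isMaximal_span_gen (hp : p ≠ 0) : (Ideal.span {gen k p}).IsMaximal := by
  have hX : (Ideal.span {(X : k[X])}).IsMaximal :=
    PrincipalIdealRing.isMaximal_of_irreducible irreducible_X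
  have := hX.map_of_surjective_of_ker_le
    (Ideal.Quotient.mk_surjective (I := Ideal.span {(X : k[X]) ^ p})) <| by
      rw [Ideal.mk_ker, Ideal.span_singleton_le_span_singleton]
      exact dvd_pow_self X hp
  rwa [Ideal.map_span, Set.image_singleton] at this

theorem gen_pow_sub_one_dvd (hp : p ≠ 0) {r : TruncPoly k p} (hr : gen k p * r = 0) :
    gen k p ^ (p - 1) ∣ r := by
  obtain ⟨f, rfl⟩ := Ideal.Quotient.mk_surjective r
  have hf : X * X ^ (p - 1) ∣ X * f := by
    rwa [mul_pow_sub_one hp, ← Ideal.mem_span_singleton, ← Ideal.Quotient.eq_zero_iff_mem]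
  exact map_dvd _ ((mul_dvd_mul_iff_left X_ne_zero).1 hf)

theorem projective_iff_exact_smul (hp : p ≠ 0) {P : Type*} [AddCommGroup P]
    [Module (TruncPoly k p) P] :
    Module.Projective (TruncPoly k p) P ↔
      Function.Exact (gen k p ^ (p - 1) • · : P → P) (gen k p • ·) := by
  constructor
  · intro _
    exact exact_smul_of_flat (by rw [mul_pow_sub_one hp, gen_pow])
      fun _ ↦ gen_pow_sub_one_dvd hp
  · intro h
    have := free_of_exact_smul (isMaximal_span_gen hp) (gen_pow k p) h
    infer_instance

theorem projective_compHom_iff_exact_smul (hp : p ≠ 0) {S : Type*} [CommRing S] [Algebra k S]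
    {P : Type*} [AddCommGroup P] [Module S P] (φ : TruncPoly k p →ₐ[k] S) :
    (letI := Module.compHom P φ.toRingHom
     Module.Projective (TruncPoly k p) P) ↔
      Function.Exact (φ (gen k p) ^ (p - 1) • · : P → P) (φ (gen k p) • ·) := by
  rw [← map_pow]
  let _ := Module.compHom P φ.toRingHom
  exact projective_iff_exact_smul hp

end TruncPoly

theorem tmul_mem_ker_frobenius_sq {k A : Type*} [CommRing k] [CommRing A] [Algebra k A] {p : ℕ}
    [Fact p.Prime] [CharP (A ⊗[k] A) p] {b b' : A} (hb : b ^ p = 0) (hb' : b' ^ p = 0) :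
    b ⊗ₜ[k] b' ∈ RingHom.ker (frobenius (A ⊗[k] A) p) ^ 2 := by
  have htmul : b ⊗ₜ[k] b' = b ⊗ₜ 1 * 1 ⊗ₜ b' := by
    rw [Algebra.TensorProduct.tmul_mul_tmul, mul_one, one_mul]
  rw [htmul, sq]
  refine Ideal.mul_mem_mul ?_ ?_ <;>
    simp [RingHom.mem_ker, frobenius_def, Algebra.TensorProduct.tmul_pow, hb, hb']

theorem statement2_general (k : Type*) [Field k] (p : ℕ) [Fact p.Prime] [CharP k p]
    (A : Type*) [CommRing A] [Nontrivial A] [Algebra k A]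
    (Δ Δ' : A →ₐ[k] A ⊗[k] A)
    (hΔ : ∀ a : A, a ^ p = 0 → Δ a - a ⊗ₜ[k] (1 : A) - (1 : A) ⊗ₜ[k] a ∈
      Submodule.span k {x : A ⊗[k] A | ∃ b : A, b ^ p = 0 ∧
        ∃ b' : A, b' ^ p = 0 ∧ x = b ⊗ₜ[k] b'})
    (hΔ' : ∀ a : A, a ^ p = 0 → Δ' a - a ⊗ₜ[k] (1 : A) - (1 : A) ⊗ₜ[k] a ∈
      Submodule.span k {x : A ⊗[k] A | ∃ b : A, b ^ p = 0 ∧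
        ∃ b' : A, b' ^ p = 0 ∧ x = b ⊗ₜ[k] b'})
    (P : Type*) [AddCommGroup P] [Module (A ⊗[k] A) P] (α : TruncPoly k p →ₐ[k] A) :
    (letI := Module.compHom P (Δ.comp α).toRingHom
     Module.Projective (TruncPoly k p) P) ↔
    (letI := Module.compHom P (Δ'.comp α).toRingHom
     Module.Projective (TruncPoly k p) P) := by
  have hp : p ≠ 0 := (Fact.out : p.Prime).ne_zero
  have : CharP (A ⊗[k] A) p :=
    charP_of_injective_algebraMap (algebraMap k (A ⊗[k] A)).injective p
  rw [TruncPoly.projective_compHom_iff_exact_smul hp,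
    TruncPoly.projective_compHom_iff_exact_smul hp]
  set a := α (TruncPoly.gen k p)
  have ha : a ^ p = 0 := by rw [← map_pow, TruncPoly.gen_pow, map_zero]
  have span_le : Submodule.span k {x : A ⊗[k] A | ∃ b : A, b ^ p = 0 ∧
      ∃ b' : A, b' ^ p = 0 ∧ x = b ⊗ₜ[k] b'} ≤
      (RingHom.ker (frobenius (A ⊗[k] A) p) ^ 2).restrictScalars k :=
    Submodule.span_le.2 fun _ ⟨_, hb, _, hb', h⟩ ↦ h ▸ tmul_mem_ker_frobenius_sq hb hb'
  refine exact_smul_iff_of_sub_mem_ker_frobenius_sq (x := Δ a) (x' := Δ' a) ?_ ?_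
  · rw [← map_pow, ha, map_zero]
  · have := span_le (sub_mem (hΔ' a ha) (hΔ a ha))
    simpa using this

theorem statement2 (k : Type*) [Field k] (p : ℕ) [Fact p.Prime] [CharP k p]
    (A : Type*) [CommRing A] [Algebra k A] [FiniteDimensional k A] [IsLocalRing A]
    (hnil : ∀ a ∈ IsLocalRing.maximalIdeal A, a ^ p = 0)
    (Δ Δ' : A →ₐ[k] A ⊗[k] A)
    (hΔ : ∀ a ∈ IsLocalRing.maximalIdeal A,
      Δ a - a ⊗ₜ[k] (1 : A) - (1 : A) ⊗ₜ[k] a ∈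
        Submodule.span k {x : A ⊗[k] A | ∃ b ∈ IsLocalRing.maximalIdeal A,
          ∃ b' ∈ IsLocalRing.maximalIdeal A, x = b ⊗ₜ[k] b'})
    (hΔ' : ∀ a ∈ IsLocalRing.maximalIdeal A,
      Δ' a - a ⊗ₜ[k] (1 : A) - (1 : A) ⊗ₜ[k] a ∈
        Submodule.span k {x : A ⊗[k] A | ∃ b ∈ IsLocalRing.maximalIdeal A,
          ∃ b' ∈ IsLocalRing.maximalIdeal A, x = b ⊗ₜ[k] b'})
    (M M' : Type*) [AddCommGroup M] [Module k M] [Module A M] [IsScalarTower k A M]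
    [AddCommGroup M'] [Module k M'] [Module A M'] [IsScalarTower k A M']
    (α : TruncPoly k p →ₐ[k] A)
    (hα : letI := Module.compHom A α.toRingHom
          Module.Free (TruncPoly k p) A) :
    (letI := extTensorModule k (A := A) (B := A) M M'
     letI := Module.compHom (M ⊗[k] M') (Δ.comp α).toRingHom
     Module.Projective (TruncPoly k p) (M ⊗[k] M')) ↔
    (letI := extTensorModule k (A := A) (B := A) M M'
     letI := Module.compHom (M ⊗[k] M') (Δ'.comp α).toRingHom
     Module.Projective (TruncPoly k p) (M ⊗[k] M')) := by
  have mem_iff (a : A) : a ∈ IsLocalRing.maximalIdeal A ↔ a ^ p = 0 :=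
    ⟨hnil a, fun ha ↦ (IsLocalRing.maximalIdeal.isMaximal A).isPrime.mem_of_pow_mem p <|
      ha ▸ zero_mem _⟩
  simp only [mem_iff] at hΔ hΔ'
  let _ := extTensorModule k (A := A) (B := A) M M'
  exact statement2_general k p A Δ Δ' hΔ hΔ' (M ⊗[k] M') α
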